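/- Let H be a Hopf algebra with invertible antipode γ, and let A be a right H-comodule (with coaction δ(a) = a⁽⁰⁾ ⊗ a⁽¹⁾ ∈ A ⊗ H), viewed as a left H-module via the induced action. Then the map τ : H* ⊗ A → A ⊗ H* defined by τ(λ ⊗ a) = a⁽⁰⁾ ⊗ λ a⁽¹⁾ (product in the dual Hopf algebra H*, with a⁽¹⁾ viewed in H* via the comodule structure over the restricted dual) is invertible, with inverse (a ⊗ λ) ↦ λ γ⁻¹(a⁽¹⁾) ⊗ a⁽⁰⁾, and is H-equivariant with respect to the H-action on H* given by x ▷ λ = x⁽²⁾ ⇀ λ ↼ γ(x⁽¹⁾). -/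

import Mathlib

/-!
STATEMENT 3: Let `H` be a Hopf algebra with invertible antipode and `K = H*` its
restricted dual (an abstract Hopf algebra with a nondegenerate Hopf pairing to `H`).
Let `A` be a right `K`-comodule, viewed as a left `H`-module via the pairing.  Then
`τ : K ⊗ A → A ⊗ K`, `λ ⊗ a ↦ a⁽⁰⁾ ⊗ λ a⁽¹⁾` is invertible with inverse
`a ⊗ λ ↦ λ γ⁻¹(a⁽¹⁾) ⊗ a⁽⁰⁾`, and is `H`-equivariant for the action
`x ▷ λ = x⁽²⁾ ⇀ λ ↼ γ(x⁽¹⁾)` on `K`.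
-/

open TensorProduct LinearMap

noncomputable section

variable (k : Type*) [Field k]
variable (H : Type*) [Ring H] [HopfAlgebra k H]
variable (K : Type*) [Ring K] [HopfAlgebra k K]

variable {H K}

/-- The action `x ▷ λ = x⁽²⁾ ⇀ λ ↼ γ(x⁽¹⁾)` of `H` on `K = H*`. -/
def actOnDual (actL actR : H ⊗[k] K →ₗ[k] K) : H ⊗[k] K →ₗ[k] K :=
  actL ∘ₗ (LinearMap.lTensor H actR) ∘ₗ
    (LinearMap.lTensor H (LinearMap.rTensor K (HopfAlgebra.antipode (R := k)))) ∘ₗ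
    (TensorProduct.assoc k H H K).toLinearMap ∘ₗ
    (LinearMap.rTensor K (TensorProduct.comm k H H).toLinearMap) ∘ₗ
    (LinearMap.rTensor K (Coalgebra.comul (R := k)))

/-- The diagonal action of `H` on a tensor product of `H`-modules. -/
def tensorAction {B C : Type*} [AddCommGroup B] [Module k B] [AddCommGroup C] [Module k C]
    (actB : H ⊗[k] B →ₗ[k] B) (actC : H ⊗[k] C →ₗ[k] C) :
    H ⊗[k] (B ⊗[k] C) →ₗ[k] B ⊗[k] C :=
  (TensorProduct.map actB actC) ∘ₗ
    (TensorProduct.tensorTensorTensorComm k H H B C).toLinearMap ∘ₗ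
    (LinearMap.rTensor (B ⊗[k] C) (Coalgebra.comul (R := k)))

variable {A : Type*} [AddCommGroup A] [Module k A]

/-- The map `τ : K ⊗ A → A ⊗ K`, `λ ⊗ a ↦ a⁽⁰⁾ ⊗ λ a⁽¹⁾`. -/
def tauStar (δA : A →ₗ[k] A ⊗[k] K) : K ⊗[k] A →ₗ[k] A ⊗[k] K :=
  (LinearMap.lTensor A (LinearMap.mul' k K)) ∘ₗ
    (TensorProduct.assoc k A K K).toLinearMap ∘ₗ
    (LinearMap.rTensor K (TensorProduct.comm k K A).toLinearMap) ∘ₗ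
    (TensorProduct.assoc k K A K).symm.toLinearMap ∘ₗ
    (LinearMap.lTensor K δA)

/-- The map `a ⊗ λ ↦ λ γ⁻¹(a⁽¹⁾) ⊗ a⁽⁰⁾`. -/
def tauStarInv (δA : A →ₗ[k] A ⊗[k] K) (γKinv : K →ₗ[k] K) : A ⊗[k] K →ₗ[k] K ⊗[k] A :=
  (TensorProduct.comm k A K).toLinearMap ∘ₗ
    (LinearMap.lTensor A (LinearMap.mul' k K)) ∘ₗ
    (LinearMap.lTensor A (LinearMap.lTensor K γKinv)) ∘ₗ
    (LinearMap.lTensor A (TensorProduct.comm k K K).toLinearMap) ∘ₗ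
    (TensorProduct.assoc k A K K).toLinearMap ∘ₗ
    (LinearMap.rTensor K δA)

/-- The left `H`-module structure on a right `K`-comodule, `h ▷ a = a⁽⁰⁾ ⟨a⁽¹⁾, h⟩`. -/
def actFromCoact (pair : K →ₗ[k] H →ₗ[k] k) (δA : A →ₗ[k] A ⊗[k] K) :
    H ⊗[k] A →ₗ[k] A :=
  (TensorProduct.rid k A).toLinearMap ∘ₗ
    (LinearMap.lTensor A (TensorProduct.lift pair)) ∘ₗ
    (TensorProduct.assoc k A K H).toLinearMap ∘ₗ
    (LinearMap.rTensor H δA) ∘ₗ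
    (TensorProduct.comm k H A).toLinearMap

/-!
A linear map `f` from `K` to the endomorphisms of `N` acts on `A ⊗ N` by
`a ⊗ n ↦ a⁽⁰⁾ ⊗ f(a⁽¹⁾) n`, and the comodule axioms say that this is an algebra homomorphism on the
convolution algebra `Hom(K, End N)`. Up to the flip of the two tensor factors, `τ` is the action of
`ρ : u ↦ (λ ↦ λ u)` and its alleged inverse is the action of `ρ ∘ γ⁻¹`; these two are convolution
inverse to each other because `γ⁻¹(u⁽²⁾) u⁽¹⁾ = ε(u) = u⁽²⁾ γ⁻¹(u⁽¹⁾)`.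

The diagonal actions of `x` on `A ⊗ K` and `K ⊗ A` are likewise the actions of
`f_x : u ↦ ⟨u, x⁽¹⁾⟩ (x⁽²⁾ ▷ ·)` and `f'_x : u ↦ ⟨u, x⁽²⁾⟩ (x⁽¹⁾ ▷ ·)`, so equivariance follows from
the identity `ρ * f'_x = f_x * ρ`, in which `A` no longer occurs. As `▷` is dual to the right
adjoint action `y ◁ x = γ(x⁽¹⁾) y x⁽²⁾`, evaluation at `y` turns it into
`(y⁽¹⁾ ◁ x⁽¹⁾) ⊗ y⁽²⁾ x⁽²⁾ = (1 ⊗ x⁽¹⁾) Δ(y ◁ x⁽²⁾)` in `H ⊗ H`. This is a consequence of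
`Δ(y ◁ x) = Δ(γ(x⁽¹⁾)) Δ(y) Δ(x⁽²⁾)` and `(1 ⊗ x⁽¹⁾) Δ(γ(x⁽²⁾)) = γ(x) ⊗ 1`.
-/

section

open Coalgebra HopfAlgebra WithConv

section CoactEnd

variable {R C M N : Type*} [CommSemiring R] [AddCommMonoid C] [Module R C]
  [AddCommMonoid M] [Module R M] [AddCommMonoid N] [Module R N]

/-- The endomorphism `m ⊗ n ↦ m⁽⁰⁾ ⊗ f(m⁽¹⁾) n` of `M ⊗ N` attached to a coaction
`δ : M → M ⊗ C` and a linear map `f : C → End N`, the latter being viewed in the convolution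
algebra. -/
def coactEnd (δ : M →ₗ[R] M ⊗[R] C) (f : WithConv (C →ₗ[R] Module.End R N)) :
    Module.End R (M ⊗[R] N) :=
  lTensor M (lift f.ofConv) ∘ₗ (TensorProduct.assoc R M C N).toLinearMap ∘ₗ rTensor N δ

variable {δ : M →ₗ[R] M ⊗[R] C}

theorem coactEnd_tmul (f : WithConv (C →ₗ[R] Module.End R N)) (m : M) (n : N) :
    coactEnd δ f (m ⊗ₜ n) = lTensor M (f.ofConv.flip n) (δ m) := by
  simp only [coactEnd, coe_comp, LinearEquiv.coe_coe, Function.comp_apply, rTensor_tmul]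
  induction δ m with
  | zero => simp
  | add z w hz hw => simp only [add_tmul, map_add, hz, hw]
  | tmul b c => simp

theorem coactEnd_zero : coactEnd δ (0 : WithConv (C →ₗ[R] Module.End R N)) = 0 := by
  ext m n
  have flip_zero : (0 : C →ₗ[R] Module.End R N).flip n = 0 := rfl
  simp [coactEnd_tmul, flip_zero]

theorem coactEnd_add (f g : WithConv (C →ₗ[R] Module.End R N)) :
    coactEnd δ (f + g) = coactEnd δ f + coactEnd δ g := by
  ext m n
  have flip_add : (f.ofConv + g.ofConv).flip n = f.ofConv.flip n + g.ofConv.flip n := rfl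
  simp [coactEnd_tmul, flip_add, lTensor_add]

theorem coactEnd_lTensor_flip (f g : WithConv (C →ₗ[R] Module.End R N)) (n : N)
    (z : M ⊗[R] C) :
    coactEnd δ f (lTensor M (g.ofConv.flip n) z) =
      lTensor M ((mul' R (Module.End R N) ∘ₗ map f.ofConv g.ofConv).flip n)
        (TensorProduct.assoc R M C C (rTensor C δ z)) := by
  induction z with
  | zero => simp
  | add z w hz hw => simp only [map_add, hz, hw]
  | tmul m c =>
    rw [lTensor_tmul, coactEnd_tmul, rTensor_tmul]
    induction δ m with
    | zero => simp
    | add z w hz hw => simp only [add_tmul, map_add, hz, hw]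
    | tmul b d => simp

theorem coactEnd_mul [CoalgebraStruct R C]
    (coassoc : lTensor M comul ∘ₗ δ =
      (TensorProduct.assoc R M C C).toLinearMap ∘ₗ rTensor C δ ∘ₗ δ)
    (f g : WithConv (C →ₗ[R] Module.End R N)) :
    coactEnd δ (f * g) = coactEnd δ f * coactEnd δ g := by
  ext m n
  have coassoc_m : TensorProduct.assoc R M C C (rTensor C δ (δ m)) = lTensor M comul (δ m) :=
    LinearMap.congr_fun coassoc.symm m
  simp only [AlgebraTensorModule.curry_apply, curry_apply, restrictScalars_self,
    Module.End.mul_apply, coactEnd_tmul, coactEnd_lTensor_flip, coassoc_m]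
  rw [← lTensor_comp_apply]
  rfl

theorem coactEnd_one [Coalgebra R C]
    (counital : (TensorProduct.rid R M).toLinearMap ∘ₗ lTensor M counit ∘ₗ δ = LinearMap.id) :
    coactEnd δ (1 : WithConv (C →ₗ[R] Module.End R N)) = 1 := by
  ext m n
  have counital_m : lTensor M counit (δ m) = m ⊗ₜ[R] (1 : R) :=
    (TensorProduct.rid R M).injective (by simpa using LinearMap.congr_fun counital m)
  have flip_one : (1 : WithConv (C →ₗ[R] Module.End R N)).ofConv.flip n =
      toSpanSingleton R N n ∘ₗ counit := by
    ext c
    simp [LinearMap.convOne_def]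
  simp [coactEnd_tmul, flip_one, lTensor_comp, counital_m]

end CoactEnd

section InverseAntipode

variable {R K : Type*} [CommSemiring R] [Semiring K] [HopfAlgebra R K] {σ : K →ₗ[R] K}

theorem sum_inverse_antipode_mul_eq_algebraMap_counit (h₁ : antipode R ∘ₗ σ = LinearMap.id)
    (h₂ : σ ∘ₗ antipode R = LinearMap.id) {u : K} {ι : Type*} (r : Repr R u ι) :
    ∑ i ∈ r.index, σ (r.right i) * r.left i = algebraMap R K (counit u) := by
  have antipode_σ (z : K) : antipode R (σ z) = z := LinearMap.congr_fun h₁ z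
  apply Function.LeftInverse.injective (g := σ) (LinearMap.congr_fun h₂)
  simp only [map_sum, antipode_mul_antidistrib, antipode_σ, Algebra.algebraMap_eq_smul_one,
    map_smul, antipode_one, sum_antipode_mul_eq_smul]

theorem sum_mul_inverse_antipode_eq_algebraMap_counit (h₁ : antipode R ∘ₗ σ = LinearMap.id)
    (h₂ : σ ∘ₗ antipode R = LinearMap.id) {u : K} {ι : Type*} (r : Repr R u ι) :
    ∑ i ∈ r.index, r.right i * σ (r.left i) = algebraMap R K (counit u) := by
  have antipode_σ (z : K) : antipode R (σ z) = z := LinearMap.congr_fun h₁ z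
  apply Function.LeftInverse.injective (g := σ) (LinearMap.congr_fun h₂)
  simp only [map_sum, antipode_mul_antidistrib, antipode_σ, Algebra.algebraMap_eq_smul_one,
    map_smul, antipode_one, sum_mul_antipode_eq_smul]

theorem mul_flip_convMul_mul_flip_comp_inverse_antipode
    (h₁ : antipode R ∘ₗ σ = LinearMap.id) (h₂ : σ ∘ₗ antipode R = LinearMap.id) :
    toConv (LinearMap.mul R K).flip * toConv ((LinearMap.mul R K).flip ∘ₗ σ) = 1 := by
  ext u l
  rw [(ℛ R u).convMul_apply]
  simp [mul_assoc, ← Finset.mul_sum, sum_inverse_antipode_mul_eq_algebraMap_counit h₁ h₂,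
    Algebra.algebraMap_eq_smul_one]

theorem mul_flip_comp_inverse_antipode_convMul_mul_flip
    (h₁ : antipode R ∘ₗ σ = LinearMap.id) (h₂ : σ ∘ₗ antipode R = LinearMap.id) :
    toConv ((LinearMap.mul R K).flip ∘ₗ σ) * toConv (LinearMap.mul R K).flip = 1 := by
  ext u l
  rw [(ℛ R u).convMul_apply]
  simp [mul_assoc, ← Finset.mul_sum, sum_mul_inverse_antipode_eq_algebraMap_counit h₁ h₂,
    Algebra.algebraMap_eq_smul_one]

end InverseAntipode

section RightAdjoint

variable {R H : Type*} [CommSemiring R] [Semiring H] [HopfAlgebra R H]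

local notation "ι₁" => AlgHom.toLinearMap (Algebra.TensorProduct.includeLeft : H →ₐ[R] H ⊗[R] H)
local notation "ι₂" => AlgHom.toLinearMap (Algebra.TensorProduct.includeRight : H →ₐ[R] H ⊗[R] H)

variable (R) in
/-- The right adjoint action `x ↦ γ(x⁽¹⁾) y x⁽²⁾` on a fixed element `y`, as a linear map in the
acting element `x`. -/
def rightAdjoint (y : H) : H →ₗ[R] H :=
  (toConv (antipode R) * toConv (mulLeft R y)).ofConv

theorem rightAdjoint_apply (y : H) {x : H} {ι : Type*} (r : Repr R x ι) :
    rightAdjoint R y x = ∑ i ∈ r.index, antipode R (r.left i) * (y * r.right i) :=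
  r.convMul_apply (toConv (antipode R)) (toConv (mulLeft R y))

theorem toConv_algHom_comp_rightAdjoint {B : Type*} [Semiring B] [Algebra R B] (φ : H →ₐ[R] B)
    (y : H) :
    toConv (φ.toLinearMap ∘ₗ rightAdjoint R y) =
      toConv (φ.toLinearMap ∘ₗ antipode R) * toConv (mulLeft R (φ y) ∘ₗ φ.toLinearMap) := by
  have φ_comp_mulLeft : φ.toLinearMap ∘ₗ mulLeft R y = mulLeft R (φ y) ∘ₗ φ.toLinearMap := by
    ext
    simp
  rw [← φ_comp_mulLeft]
  exact congrArg toConv (algHom_comp_convMul_distrib φ _ _)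

theorem includeLeft_mulLeft_convMul_includeRight_mulLeft (s t : H) :
    toConv (mulLeft R (s ⊗ₜ[R] 1) ∘ₗ ι₁) * toConv (ι₂ ∘ₗ mulLeft R t) =
      toConv (mulLeft R (s ⊗ₜ[R] t) ∘ₗ comul) := by
  ext x
  rw [(ℛ R x).convMul_apply]
  conv_rhs => simp [← (ℛ R x).eq, Finset.mul_sum]
  simp

theorem includeRight_convMul_comul_antipode :
    toConv ι₂ * toConv (comul ∘ₗ antipode R) = toConv (ι₁ ∘ₗ antipode R) := by
  have antipode_convMul_includeLeft : toConv (ι₁ ∘ₗ antipode R) * toConv ι₁ = 1 := by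
    have := algHom_comp_convMul_distrib (Algebra.TensorProduct.includeLeft : H →ₐ[R] H ⊗[R] H)
      (toConv (antipode R)) (toConv LinearMap.id)
    rw [antipode_mul_id] at this
    ext x
    simpa using (LinearMap.congr_fun this x).symm
  have includeLeft_convMul_includeRight : toConv ι₁ * toConv ι₂ = toConv comul := by
    simpa [← Algebra.TensorProduct.one_def] using
      includeLeft_mulLeft_convMul_includeRight_mulLeft (R := R) (1 : H) 1
  calc
    toConv ι₂ * toConv (comul ∘ₗ antipode R)
    _ = toConv (ι₁ ∘ₗ antipode R) * (toConv ι₁ * toConv ι₂) * toConv (comul ∘ₗ antipode R) := by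
      rw [← mul_assoc, antipode_convMul_includeLeft, one_mul]
    _ = toConv (ι₁ ∘ₗ antipode R) := by
      rw [includeLeft_convMul_includeRight, mul_assoc, comul_right_inv, mul_one]

theorem includeRight_convMul_comul_rightAdjoint {y : H} {ι : Type*} (r : Repr R y ι) :
    toConv ι₂ * toConv (comul ∘ₗ rightAdjoint R y) =
      ∑ j ∈ r.index, toConv (ι₁ ∘ₗ rightAdjoint R (r.left j)) *
        toConv (ι₂ ∘ₗ mulLeft R (r.right j)) := by
  have mulLeft_comul : ∑ j ∈ r.index, toConv (mulLeft R (r.left j ⊗ₜ[R] r.right j) ∘ₗ comul) =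
      toConv (mulLeft R (comul (R := R) y) ∘ₗ comul) := by
    ext x
    simp [← r.eq, Finset.sum_mul]
  calc
    toConv ι₂ * toConv (comul ∘ₗ rightAdjoint R y)
    _ = toConv ι₂ * (toConv (comul ∘ₗ antipode R) *
          toConv (mulLeft R (comul (R := R) y) ∘ₗ comul)) :=
      congrArg (toConv ι₂ * ·)
        (toConv_algHom_comp_rightAdjoint (Bialgebra.comulAlgHom R H) y)
    _ = toConv (ι₁ ∘ₗ antipode R) * toConv (mulLeft R (comul (R := R) y) ∘ₗ comul) := by
      rw [← mul_assoc, includeRight_convMul_comul_antipode]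
    _ = _ := by
      simp only [toConv_algHom_comp_rightAdjoint, mul_assoc,
        Algebra.TensorProduct.includeLeft_apply,
        includeLeft_mulLeft_convMul_includeRight_mulLeft, ← Finset.mul_sum, mulLeft_comul]

theorem sum_rightAdjoint_tmul_mul {x y : H} {ι κ : Type*} (r : Repr R x ι) (s : Repr R y κ) :
    ∑ i ∈ r.index, ∑ j ∈ s.index,
        rightAdjoint R (s.left j) (r.left i) ⊗ₜ[R] (s.right j * r.right i) =
      ∑ i ∈ r.index, (1 ⊗ₜ[R] r.left i) * comul (R := R) (rightAdjoint R y (r.right i)) := by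
  have convMul_ofConv_apply (f g : WithConv (H →ₗ[R] H ⊗[R] H)) :
      (f * g).ofConv x = ∑ i ∈ r.index, f (r.left i) * g (r.right i) :=
    r.convMul_apply f g
  have h := LinearMap.congr_fun (congrArg ofConv (includeRight_convMul_comul_rightAdjoint s)) x
  simp only [ofConv_sum, LinearMap.sum_apply, convMul_ofConv_apply] at h
  rw [Finset.sum_comm]
  simpa using h.symm

end RightAdjoint

section Pairing

variable {R H C N : Type*} [CommSemiring R] [AddCommMonoid H] [Module R H]
  [AddCommMonoid C] [Module R C] [AddCommMonoid N] [Module R N]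

/-- For a pairing of `C` with `H` and a linear action of `H` on `N`, the map sending `s ⊗ t` in
`H ⊗ H` to `u ↦ ⟨u, s⟩ (t ▷ ·)`. With `coactEnd` it expresses the diagonal action on `M ⊗ N`, where
`H` acts on the `C`-comodule `M` through the pairing. -/
def pairingEnd (pair : C →ₗ[R] H →ₗ[R] R) (act : H ⊗[R] N →ₗ[R] N) :
    H ⊗[R] H →ₗ[R] C →ₗ[R] Module.End R N :=
  lift (smulRightₗ.compl₁₂ pair.flip (curry act))

theorem pairingEnd_tmul_apply (pair : C →ₗ[R] H →ₗ[R] R) (act : H ⊗[R] N →ₗ[R] N) (s t : H)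
    (u : C) (n : N) : pairingEnd pair act (s ⊗ₜ t) u n = pair u s • act (t ⊗ₜ n) := by
  simp [pairingEnd]

end Pairing

section HopfPairing

variable {R H K : Type*} [CommSemiring R] [Semiring H]

theorem sum_pair_mul_dualDistrib [Algebra R H] [AddCommMonoid K] [Module R K]
    [CoalgebraStruct R K] {pair : K →ₗ[R] H →ₗ[R] R}
    (pair_mul_right : ∀ x y : H,
      toConv (pair.flip (x * y)) = toConv (pair.flip x) * toConv (pair.flip y))
    (l : K) {u : K} {ι : Type*} (r : Repr R u ι) (x : H) (w : H ⊗[R] H) :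
    ∑ a ∈ r.index, pair (r.left a) x * dualDistrib R H H (pair l ⊗ₜ pair (r.right a)) w =
      dualDistrib R H H (pair l ⊗ₜ pair u) ((1 ⊗ₜ x) * w) := by
  have pair_mul_right_apply (x y : H) :
      pair u (x * y) = ∑ a ∈ r.index, pair (r.left a) x * pair (r.right a) y :=
    (congrArg (· u) (pair_mul_right x y)).trans (r.convMul_apply _ _)
  induction w with
  | zero => simp
  | add z w hz hw => simp only [map_add, mul_add, Finset.sum_add_distrib, hz, hw]
  | tmul s t => simp [pair_mul_right_apply, Finset.mul_sum, mul_left_comm]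

variable [HopfAlgebra R H] [Semiring K] [Bialgebra R K]
  {pair : K →ₗ[R] H →ₗ[R] R} {act : H ⊗[R] K →ₗ[R] K}

theorem pair_mul_flip_convMul_pairingEnd
    (pair_mul_left : ∀ l m : K, toConv (pair (l * m)) = toConv (pair l) * toConv (pair m))
    (pair_mul_right : ∀ x y : H,
      toConv (pair.flip (x * y)) = toConv (pair.flip x) * toConv (pair.flip y))
    (pair_act : ∀ (x y : H) (l : K), pair (act (x ⊗ₜ l)) y = pair l (rightAdjoint R y x))
    {x y : H} {ι κ : Type*} (r : Repr R x ι) (s : Repr R y κ) (l u : K) :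
    pair ((toConv (LinearMap.mul R K).flip *
        toConv (pairingEnd pair act (TensorProduct.comm R H H (comul x)))) u l) y =
      ∑ i ∈ r.index, ∑ j ∈ s.index,
        pair l (rightAdjoint R (s.left j) (r.left i)) * pair u (s.right j * r.right i) := by
  have pair_mul_left_apply (l m : K) :
      pair (l * m) y = ∑ j ∈ s.index, pair l (s.left j) * pair m (s.right j) :=
    (congrArg (· y) (pair_mul_left l m)).trans (s.convMul_apply _ _)
  have pair_mul_right_apply (x y : H) :
      pair u (x * y) = ∑ a ∈ (ℛ R u).index, pair ((ℛ R u).left a) x * pair ((ℛ R u).right a) y :=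
    (congrArg (· u) (pair_mul_right x y)).trans ((ℛ R u).convMul_apply _ _)
  rw [(ℛ R u).convMul_apply]
  simp only [← r.eq]
  simp only [map_sum, comm_tmul, coe_sum, Finset.sum_apply, Finset.mul_sum,
    Module.End.mul_apply, pairingEnd_tmul_apply, map_smul, flip_apply, mul_apply_apply, coe_smul,
    Pi.smul_apply, smul_eq_mul, pair_mul_left_apply, pair_mul_right_apply, pair_act]
  rw [Finset.sum_comm]
  refine Finset.sum_congr rfl fun i _ => ?_
  rw [Finset.sum_comm]
  refine Finset.sum_congr rfl fun j _ => Finset.sum_congr rfl fun a _ => ?_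
  ring

theorem pair_pairingEnd_convMul_mul_flip
    (pair_mul_left : ∀ l m : K, toConv (pair (l * m)) = toConv (pair l) * toConv (pair m))
    (pair_mul_right : ∀ x y : H,
      toConv (pair.flip (x * y)) = toConv (pair.flip x) * toConv (pair.flip y))
    (pair_act : ∀ (x y : H) (l : K), pair (act (x ⊗ₜ l)) y = pair l (rightAdjoint R y x))
    {x : H} {ι : Type*} (r : Repr R x ι) (y : H) (l u : K) :
    pair ((toConv (pairingEnd pair act (comul x)) * toConv (LinearMap.mul R K).flip) u l) y =
      ∑ i ∈ r.index, dualDistrib R H H (pair l ⊗ₜ pair u)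
        ((1 ⊗ₜ r.left i) * comul (R := R) (rightAdjoint R y (r.right i))) := by
  have pair_mul_left_apply (l m : K) (y : H) :
      pair (l * m) y = dualDistrib R H H (pair l ⊗ₜ pair m) (comul y) := by
    refine (congrArg (· y) (pair_mul_left l m)).trans (((ℛ R y).convMul_apply _ _).trans ?_)
    simp [← (ℛ R y).eq]
  rw [(ℛ R u).convMul_apply]
  simp only [← r.eq]
  simp only [map_sum, coe_sum, Finset.sum_apply, Module.End.mul_apply, pairingEnd_tmul_apply,
    map_smul, flip_apply, mul_apply_apply, coe_smul, Pi.smul_apply, smul_eq_mul,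
    pair_mul_left_apply, pair_act, ← sum_pair_mul_dualDistrib pair_mul_right l (ℛ R u)]
  exact Finset.sum_comm

theorem mul_flip_convMul_pairingEnd_comm (pair_injective : Function.Injective pair)
    (pair_mul_left : ∀ l m : K, toConv (pair (l * m)) = toConv (pair l) * toConv (pair m))
    (pair_mul_right : ∀ x y : H,
      toConv (pair.flip (x * y)) = toConv (pair.flip x) * toConv (pair.flip y))
    (pair_act : ∀ (x y : H) (l : K), pair (act (x ⊗ₜ l)) y = pair l (rightAdjoint R y x))
    (x : H) :
    toConv (LinearMap.mul R K).flip *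
        toConv (pairingEnd pair act (TensorProduct.comm R H H (comul x))) =
      toConv (pairingEnd pair act (comul x)) * toConv (LinearMap.mul R K).flip := by
  ext u l
  refine pair_injective (LinearMap.ext fun y => ?_)
  refine (pair_mul_flip_convMul_pairingEnd pair_mul_left pair_mul_right pair_act
    (ℛ R x) (ℛ R y) l u).trans (Eq.trans ?_ (pair_pairingEnd_convMul_mul_flip
    pair_mul_left pair_mul_right pair_act (ℛ R x) y l u).symm)
  rw [← map_sum, ← sum_rightAdjoint_tmul_mul (ℛ R x) (ℛ R y)]
  simp

end HopfPairing

section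

variable {k}

theorem pair_actOnDual {pair : K →ₗ[k] H →ₗ[k] k} {actL actR : H ⊗[k] K →ₗ[k] K}
    (hactL : ∀ (x y : H) (lam : K), pair (actL (x ⊗ₜ[k] lam)) y = pair lam (y * x))
    (hactR : ∀ (x y : H) (lam : K), pair (actR (x ⊗ₜ[k] lam)) y = pair lam (x * y))
    (x y : H) (l : K) :
    pair (actOnDual k actL actR (x ⊗ₜ l)) y = pair l (rightAdjoint k y x) := by
  rw [rightAdjoint_apply y (ℛ k x)]
  simp only [actOnDual, coe_comp, Function.comp_apply, rTensor_tmul]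
  conv_lhs => rw [← (ℛ k x).eq]
  simp [sum_tmul, hactL, hactR]

theorem tauStar_comm (δA : A →ₗ[k] A ⊗[k] K) (z : A ⊗[k] K) :
    tauStar k δA (TensorProduct.comm k A K z) =
      coactEnd δA (toConv (LinearMap.mul k K).flip) z := by
  induction z with
  | zero => simp
  | add z w hz hw => simp only [map_add, hz, hw]
  | tmul a l =>
    simp only [tauStar, coe_comp, LinearEquiv.coe_coe, Function.comp_apply, comm_tmul,
      lTensor_tmul, coactEnd_tmul]
    induction δA a with
    | zero => simp
    | add z w hz hw => simp only [tmul_add, map_add, hz, hw]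
    | tmul b u => simp

theorem tauStarInv_apply (δA : A →ₗ[k] A ⊗[k] K) (σ : K →ₗ[k] K) (z : A ⊗[k] K) :
    tauStarInv k δA σ z =
      TensorProduct.comm k A K (coactEnd δA (toConv ((LinearMap.mul k K).flip ∘ₗ σ)) z) := by
  induction z with
  | zero => simp
  | add z w hz hw => simp only [map_add, hz, hw]
  | tmul a l =>
    simp only [tauStarInv, coe_comp, LinearEquiv.coe_coe, Function.comp_apply, rTensor_tmul,
      coactEnd_tmul]
    induction δA a with
    | zero => simp
    | add z w hz hw => simp only [add_tmul, map_add, hz, hw]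
    | tmul b u => simp

theorem actFromCoact_tmul (pair : K →ₗ[k] H →ₗ[k] k) (δA : A →ₗ[k] A ⊗[k] K) (x : H) (a : A) :
    actFromCoact k pair δA (x ⊗ₜ a) =
      TensorProduct.rid k A (lTensor A (pair.flip x) (δA a)) := by
  simp only [actFromCoact, coe_comp, LinearEquiv.coe_coe, Function.comp_apply, comm_tmul,
    rTensor_tmul]
  induction δA a with
  | zero => simp
  | add z w hz hw => simp only [add_tmul, map_add, hz, hw]
  | tmul b u => simp

theorem coactEnd_pairingEnd_tmul {N : Type*} [AddCommGroup N] [Module k N]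
    (pair : K →ₗ[k] H →ₗ[k] k) (act : H ⊗[k] N →ₗ[k] N) (δA : A →ₗ[k] A ⊗[k] K)
    (w : H ⊗[k] H) (a : A) (n : N) :
    coactEnd δA (toConv (pairingEnd pair act w)) (a ⊗ₜ n) =
      map ((curry (actFromCoact k pair δA)).flip a) ((curry act).flip n) w := by
  induction w with
  | zero => simp only [map_zero, toConv_zero, coactEnd_zero, LinearMap.zero_apply]
  | add z w hz hw => simp only [map_add, toConv_add, coactEnd_add, LinearMap.add_apply, hz, hw]
  | tmul s t =>
    simp only [coactEnd_tmul, map_tmul, flip_apply, curry_apply, actFromCoact_tmul]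
    induction δA a with
    | zero => simp
    | add z w hz hw => simp only [map_add, add_tmul, hz, hw]
    | tmul b u => simp [pairingEnd_tmul_apply, smul_tmul]

theorem tensorAction_tmul {B N : Type*} [AddCommGroup B] [Module k B] [AddCommGroup N]
    [Module k N] (actB : H ⊗[k] B →ₗ[k] B) (actN : H ⊗[k] N →ₗ[k] N) (x : H) (b : B) (n : N) :
    tensorAction k actB actN (x ⊗ₜ (b ⊗ₜ n)) =
      map ((curry actB).flip b) ((curry actN).flip n) (comul x) := by
  simp only [tensorAction, coe_comp, LinearEquiv.coe_coe, Function.comp_apply, rTensor_tmul]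
  induction comul (R := k) x with
  | zero => simp
  | add z w hz hw => simp only [map_add, add_tmul, hz, hw]
  | tmul s t => simp

theorem tensorAction_actFromCoact_left {N : Type*} [AddCommGroup N] [Module k N]
    (pair : K →ₗ[k] H →ₗ[k] k) (act : H ⊗[k] N →ₗ[k] N) (δA : A →ₗ[k] A ⊗[k] K) (x : H)
    (z : A ⊗[k] N) :
    tensorAction k (actFromCoact k pair δA) act (x ⊗ₜ z) =
      coactEnd δA (toConv (pairingEnd pair act (comul x))) z := by
  induction z with
  | zero => simp
  | add z w hz hw => simp only [tmul_add, map_add, hz, hw]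
  | tmul a n => rw [tensorAction_tmul, coactEnd_pairingEnd_tmul]

theorem tensorAction_actFromCoact_right {N : Type*} [AddCommGroup N] [Module k N]
    (pair : K →ₗ[k] H →ₗ[k] k) (act : H ⊗[k] N →ₗ[k] N) (δA : A →ₗ[k] A ⊗[k] K) (x : H)
    (z : A ⊗[k] N) :
    tensorAction k act (actFromCoact k pair δA) (x ⊗ₜ TensorProduct.comm k A N z) =
      TensorProduct.comm k A N (coactEnd δA (toConv (pairingEnd pair act
        (TensorProduct.comm k H H (comul x)))) z) := by
  induction z with
  | zero => simp
  | add z w hz hw => simp only [tmul_add, map_add, hz, hw]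
  | tmul a n => rw [comm_tmul, tensorAction_tmul, coactEnd_pairingEnd_tmul, map_comm, comm_comm]

theorem toConv_pair_mul {pair : K →ₗ[k] H →ₗ[k] k}
    (pair_mulK : lift pair ∘ₗ rTensor H (mul' k K) =
      mul' k k ∘ₗ map (lift pair) (lift pair) ∘ₗ
        (tensorTensorTensorComm k K K H H).toLinearMap ∘ₗ lTensor (K ⊗[k] K) comul)
    (l m : K) :
    toConv (pair (l * m)) = toConv (pair l) * toConv (pair m) := by
  ext y
  have h := LinearMap.congr_fun pair_mulK ((l ⊗ₜ m) ⊗ₜ y)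
  rw [(ℛ k y).convMul_apply]
  simpa [← (ℛ k y).eq, tmul_sum] using h

theorem toConv_pair_flip_mul {pair : K →ₗ[k] H →ₗ[k] k}
    (pair_mulH : lift pair ∘ₗ lTensor K (mul' k H) =
      mul' k k ∘ₗ map (lift pair) (lift pair) ∘ₗ
        (tensorTensorTensorComm k K K H H).toLinearMap ∘ₗ rTensor (H ⊗[k] H) comul)
    (x y : H) :
    toConv (pair.flip (x * y)) = toConv (pair.flip x) * toConv (pair.flip y) := by
  ext u
  have h := LinearMap.congr_fun pair_mulH (u ⊗ₜ (x ⊗ₜ y))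
  rw [(ℛ k u).convMul_apply]
  simpa [← (ℛ k u).eq, sum_tmul] using h

section Comodule

variable {δA : A →ₗ[k] A ⊗[k] K} {γKinv : K →ₗ[k] K}

theorem tauStar_comp_tauStarInv
    (coassoc : lTensor A comul ∘ₗ δA =
      (TensorProduct.assoc k A K K).toLinearMap ∘ₗ rTensor K δA ∘ₗ δA)
    (counital : (TensorProduct.rid k A).toLinearMap ∘ₗ lTensor A counit ∘ₗ δA = LinearMap.id)
    (h₁ : antipode k ∘ₗ γKinv = LinearMap.id) (h₂ : γKinv ∘ₗ antipode k = LinearMap.id) :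
    tauStar k δA ∘ₗ tauStarInv k δA γKinv = LinearMap.id := by
  refine LinearMap.ext fun z => ?_
  rw [comp_apply, tauStarInv_apply, tauStar_comm, ← Module.End.mul_apply, ← coactEnd_mul coassoc,
    mul_flip_convMul_mul_flip_comp_inverse_antipode h₁ h₂, coactEnd_one counital]
  rfl

theorem tauStarInv_comp_tauStar
    (coassoc : lTensor A comul ∘ₗ δA =
      (TensorProduct.assoc k A K K).toLinearMap ∘ₗ rTensor K δA ∘ₗ δA)
    (counital : (TensorProduct.rid k A).toLinearMap ∘ₗ lTensor A counit ∘ₗ δA = LinearMap.id)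
    (h₁ : antipode k ∘ₗ γKinv = LinearMap.id) (h₂ : γKinv ∘ₗ antipode k = LinearMap.id) :
    tauStarInv k δA γKinv ∘ₗ tauStar k δA = LinearMap.id := by
  refine LinearMap.ext fun z => ?_
  obtain ⟨z, rfl⟩ := (TensorProduct.comm k A K).surjective z
  rw [comp_apply, tauStar_comm, tauStarInv_apply, ← Module.End.mul_apply, ← coactEnd_mul coassoc,
    mul_flip_comp_inverse_antipode_convMul_mul_flip h₁ h₂, coactEnd_one counital]
  rfl

theorem tauStar_comp_tensorAction
    (coassoc : lTensor A comul ∘ₗ δA =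
      (TensorProduct.assoc k A K K).toLinearMap ∘ₗ rTensor K δA ∘ₗ δA)
    {pair : K →ₗ[k] H →ₗ[k] k} {act : H ⊗[k] K →ₗ[k] K}
    (pair_injective : Function.Injective pair)
    (pair_mul_left : ∀ l m : K, toConv (pair (l * m)) = toConv (pair l) * toConv (pair m))
    (pair_mul_right : ∀ x y : H,
      toConv (pair.flip (x * y)) = toConv (pair.flip x) * toConv (pair.flip y))
    (pair_act : ∀ (x y : H) (l : K), pair (act (x ⊗ₜ l)) y = pair l (rightAdjoint k y x)) :
    tauStar k δA ∘ₗ tensorAction k act (actFromCoact k pair δA) =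
      tensorAction k (actFromCoact k pair δA) act ∘ₗ lTensor H (tauStar k δA) := by
  refine TensorProduct.ext' fun x z => ?_
  obtain ⟨z, rfl⟩ := (TensorProduct.comm k A K).surjective z
  simp only [comp_apply, lTensor_tmul, tensorAction_actFromCoact_left,
    tensorAction_actFromCoact_right, tauStar_comm, ← Module.End.mul_apply, ← coactEnd_mul coassoc,
    mul_flip_convMul_pairingEnd_comm pair_injective pair_mul_left pair_mul_right pair_act]

end Comodule

end

theorem statement3_general
    (pair : K →ₗ[k] H →ₗ[k] k)
    (pair_mulK : (TensorProduct.lift pair) ∘ₗ (LinearMap.rTensor H (LinearMap.mul' k K))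
      = (LinearMap.mul' k k) ∘ₗ
          (TensorProduct.map (TensorProduct.lift pair) (TensorProduct.lift pair)) ∘ₗ
          (TensorProduct.tensorTensorTensorComm k K K H H).toLinearMap ∘ₗ
          (LinearMap.lTensor (K ⊗[k] K) (Coalgebra.comul (R := k))))
    (pair_mulH : (TensorProduct.lift pair) ∘ₗ (LinearMap.lTensor K (LinearMap.mul' k H))
      = (LinearMap.mul' k k) ∘ₗ
          (TensorProduct.map (TensorProduct.lift pair) (TensorProduct.lift pair)) ∘ₗ
          (TensorProduct.tensorTensorTensorComm k K K H H).toLinearMap ∘ₗ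
          (LinearMap.rTensor (H ⊗[k] H) (Coalgebra.comul (R := k))))
    (pair_nondeg : ∀ lam : K, (∀ x : H, pair lam x = 0) → lam = 0)
    (γKinv : K →ₗ[k] K)
    (hγK : (HopfAlgebra.antipode (R := k) (A := K)) ∘ₗ γKinv = LinearMap.id ∧
      γKinv ∘ₗ (HopfAlgebra.antipode (R := k) (A := K)) = LinearMap.id)
    (actL actR : H ⊗[k] K →ₗ[k] K)
    (hactL : ∀ (x y : H) (lam : K), pair (actL (x ⊗ₜ[k] lam)) y = pair lam (y * x))
    (hactR : ∀ (x y : H) (lam : K), pair (actR (x ⊗ₜ[k] lam)) y = pair lam (x * y))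
    (δA : A →ₗ[k] A ⊗[k] K)
    (coassoc : (LinearMap.lTensor A (Coalgebra.comul (R := k))) ∘ₗ δA
      = (TensorProduct.assoc k A K K).toLinearMap ∘ₗ (LinearMap.rTensor K δA) ∘ₗ δA)
    (counital : (TensorProduct.rid k A).toLinearMap ∘ₗ
      (LinearMap.lTensor A (Coalgebra.counit (R := k))) ∘ₗ δA = LinearMap.id) :
    (tauStar k δA) ∘ₗ (tauStarInv k δA γKinv) = LinearMap.id ∧
    (tauStarInv k δA γKinv) ∘ₗ (tauStar k δA) = LinearMap.id ∧
    (tauStar k δA) ∘ₗ (tensorAction k (actOnDual k actL actR) (actFromCoact k pair δA))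
      = (tensorAction k (actFromCoact k pair δA) (actOnDual k actL actR)) ∘ₗ
          (LinearMap.lTensor H (tauStar k δA)) := by
  obtain ⟨antipode_γKinv, γKinv_antipode⟩ := hγK
  have pair_injective : Function.Injective pair :=
    (injective_iff_map_eq_zero pair).2 fun l hl => pair_nondeg l (LinearMap.congr_fun hl)
  exact ⟨tauStar_comp_tauStarInv coassoc counital antipode_γKinv γKinv_antipode,
    tauStarInv_comp_tauStar coassoc counital antipode_γKinv γKinv_antipode,
    tauStar_comp_tensorAction coassoc pair_injective (toConv_pair_mul pair_mulK)
      (toConv_pair_flip_mul pair_mulH) (pair_actOnDual hactL hactR)⟩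

end

theorem statement3
    -- the canonical Hopf pairing between `K = H*` and `H`:
    (pair : K →ₗ[k] H →ₗ[k] k)
    (pair_mulK : (TensorProduct.lift pair) ∘ₗ (LinearMap.rTensor H (LinearMap.mul' k K))
      = (LinearMap.mul' k k) ∘ₗ
          (TensorProduct.map (TensorProduct.lift pair) (TensorProduct.lift pair)) ∘ₗ
          (TensorProduct.tensorTensorTensorComm k K K H H).toLinearMap ∘ₗ
          (LinearMap.lTensor (K ⊗[k] K) (Coalgebra.comul (R := k))))
    (pair_mulH : (TensorProduct.lift pair) ∘ₗ (LinearMap.lTensor K (LinearMap.mul' k H))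
      = (LinearMap.mul' k k) ∘ₗ
          (TensorProduct.map (TensorProduct.lift pair) (TensorProduct.lift pair)) ∘ₗ
          (TensorProduct.tensorTensorTensorComm k K K H H).toLinearMap ∘ₗ
          (LinearMap.rTensor (H ⊗[k] H) (Coalgebra.comul (R := k))))
    (pair_one : ∀ x : H, pair 1 x = Coalgebra.counit (R := k) x)
    (pair_one' : ∀ lam : K, pair lam 1 = Coalgebra.counit (R := k) lam)
    (pair_antipode : ∀ (lam : K) (x : H),
      pair (HopfAlgebra.antipode (R := k) lam) x = pair lam (HopfAlgebra.antipode (R := k) x))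
    (pair_nondeg : (∀ lam : K, (∀ x : H, pair lam x = 0) → lam = 0) ∧
      (∀ x : H, (∀ lam : K, pair lam x = 0) → x = 0))
    -- the antipodes are invertible:
    (γHinv : H →ₗ[k] H)
    (hγH : (HopfAlgebra.antipode (R := k) (A := H)) ∘ₗ γHinv = LinearMap.id ∧
      γHinv ∘ₗ (HopfAlgebra.antipode (R := k) (A := H)) = LinearMap.id)
    (γKinv : K →ₗ[k] K)
    (hγK : (HopfAlgebra.antipode (R := k) (A := K)) ∘ₗ γKinv = LinearMap.id ∧
      γKinv ∘ₗ (HopfAlgebra.antipode (R := k) (A := K)) = LinearMap.id)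
    -- the coregular actions `⟨x ⇀ λ, y⟩ = ⟨λ, yx⟩`, `⟨λ ↼ x, y⟩ = ⟨λ, xy⟩`:
    (actL actR : H ⊗[k] K →ₗ[k] K)
    (hactL : ∀ (x y : H) (lam : K), pair (actL (x ⊗ₜ[k] lam)) y = pair lam (y * x))
    (hactR : ∀ (x y : H) (lam : K), pair (actR (x ⊗ₜ[k] lam)) y = pair lam (x * y))
    -- `A` is a right `K`-comodule:
    (δA : A →ₗ[k] A ⊗[k] K)
    (coassoc : (LinearMap.lTensor A (Coalgebra.comul (R := k))) ∘ₗ δA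
      = (TensorProduct.assoc k A K K).toLinearMap ∘ₗ (LinearMap.rTensor K δA) ∘ₗ δA)
    (counital : (TensorProduct.rid k A).toLinearMap ∘ₗ
      (LinearMap.lTensor A (Coalgebra.counit (R := k))) ∘ₗ δA = LinearMap.id) :
    -- `τ` is invertible, with the stated inverse:
    (tauStar k δA) ∘ₗ (tauStarInv k δA γKinv) = LinearMap.id ∧
    (tauStarInv k δA γKinv) ∘ₗ (tauStar k δA) = LinearMap.id ∧
    -- `τ` is `H`-equivariant:
    (tauStar k δA) ∘ₗ (tensorAction k (actOnDual k actL actR) (actFromCoact k pair δA))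
      = (tensorAction k (actFromCoact k pair δA) (actOnDual k actL actR)) ∘ₗ
          (LinearMap.lTensor H (tauStar k δA)) :=
  statement3_general k pair pair_mulK pair_mulH pair_nondeg.1 γKinv hγK actL actR hactL hactR δA
    coassoc counital

end
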